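/- Let a ∈ ℝⁿ and let ā = (a₁ + ⋯ + aₙ)/n denote its mean. The isotonic projection a⁺ has all entries equal (i.e., a⁺₁ = a⁺₂ = ⋯ = a⁺ₙ) if and only if (a₁ + ⋯ + a_k)/k ≤ ā for every k = 1,…,n. -/

import Mathlib

/-!
A constant vector `c` lies in the lineality space of the isotonic cone `K`, so it is the projection
of `a` onto `K` exactly when `a - c` lies in the polar cone of `K`. By summation by parts, that
polar cone consists of the vectors with total sum zero and nonpositive initial sums; for `a - c`
this says that `c` is the mean of `a` and that no initial average of `a` exceeds it.
-/

open Finset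

/-- The isotonic cone `{x : x₁ ≥ x₂ ≥ ⋯ ≥ xₙ}` in `ℝⁿ`. -/
def isoCone (n : ℕ) : Set (EuclideanSpace ℝ (Fin n)) :=
  {x | ∀ i j : Fin n, i ≤ j → x j ≤ x i}

/-- `p` is the metric (Euclidean) projection of `y` onto `S`. -/
def IsProjOn {n : ℕ} (S : Set (EuclideanSpace ℝ (Fin n)))
    (y p : EuclideanSpace ℝ (Fin n)) : Prop :=
  p ∈ S ∧ ∀ r ∈ S, ‖y - p‖ ≤ ‖y - r‖

theorem sum_mul_le_mul_sum_of_antitoneOn {ι R : Type*} [LinearOrder ι] [Ring R] [PartialOrder R]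
    [IsOrderedRing R] {s : Finset ι} {w b : ι → R} {c : R}
    (hw : AntitoneOn w s) (hc : ∀ i ∈ s, c ≤ w i)
    (hb : ∀ k ∈ s, ∑ i ∈ s with i ≤ k, b i ≤ 0) :
    ∑ i ∈ s, w i * b i ≤ c * ∑ i ∈ s, b i := by
  induction s using Finset.induction_on_max generalizing c with
  | empty => simp
  | insert m s hm ih =>
    have hms : m ∉ s := fun h ↦ (hm m h).false
    have hw_min : ∀ i ∈ s, w m ≤ w i := fun i hi ↦
      hw (by simp [hi]) (by simp) (hm i hi).le
    have hb_init : ∀ k ∈ s, ∑ i ∈ s with i ≤ k, b i ≤ 0 := fun k hk ↦ by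
      simpa [filter_insert, (hm k hk).not_ge] using hb k (mem_insert_of_mem hk)
    have hb_total : ∑ i ∈ insert m s, b i ≤ 0 := by
      have hfilter : (insert m s).filter (· ≤ m) = insert m s :=
        filter_true_of_mem (by simpa using fun i hi ↦ (hm i hi).le)
      simpa only [hfilter] using hb m (mem_insert_self m s)
    calc ∑ i ∈ insert m s, w i * b i
        = w m * b m + ∑ i ∈ s, w i * b i := sum_insert hms
      _ ≤ w m * b m + w m * ∑ i ∈ s, b i := by
          gcongr
          exact ih (hw.mono (by simp)) hw_min hb_init
      _ = w m * ∑ i ∈ insert m s, b i := by rw [sum_insert hms, mul_add]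
      _ ≤ c * ∑ i ∈ insert m s, b i :=
          mul_le_mul_of_nonpos_right (hc m (mem_insert_self m s)) hb_total

theorem forall_antitone_sum_mul_nonpos_iff {ι R : Type*} [LinearOrder ι] [Fintype ι]
    [LocallyFiniteOrderBot ι] [Ring R] [LinearOrder R] [IsOrderedRing R] {b : ι → R} :
    (∀ w : ι → R, Antitone w → ∑ i, w i * b i ≤ 0) ↔
      ∑ i, b i = 0 ∧ ∀ k, ∑ i ∈ Iic k, b i ≤ 0 := by
  constructor
  · intro h
    have hle : ∑ i, b i ≤ 0 := by simpa using h 1 antitone_const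
    have hge : 0 ≤ ∑ i, b i := by simpa using h (fun _ ↦ -1) antitone_const
    refine ⟨hle.antisymm hge, fun k ↦ ?_⟩
    have hanti : Antitone fun i ↦ if i ∈ Iic k then (1 : R) else 0 := by
      intro i j hij
      by_cases hj : j ≤ k
      · simp [hj, hij.trans hj]
      · simpa [hj] using ite_nonneg zero_le_one le_rfl
    simpa only [ite_mul, one_mul, zero_mul, sum_ite_mem, univ_inter] using h _ hanti
  · rintro ⟨htotal, hinit⟩ w hw
    obtain ⟨c, hc⟩ := (Set.finite_range w).bddBelow
    have h := sum_mul_le_mul_sum_of_antitoneOn (s := univ) (hw.antitoneOn _)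
      (fun i _ ↦ hc (Set.mem_range_self i)) (b := b)
      (by simpa only [filter_ge_eq_Iic] using fun k _ ↦ hinit k)
    rwa [htotal, mul_zero] at h

section Projection

variable {n : ℕ} {S : Set (EuclideanSpace ℝ (Fin n))} {y p q : EuclideanSpace ℝ (Fin n)}

theorem isProjOn_iff_inner_sub_nonpos (hS : Convex ℝ S) :
    IsProjOn S y p ↔ p ∈ S ∧ ∀ w ∈ S, inner ℝ (y - p) (w - p) ≤ 0 := by
  refine and_congr_right fun hp ↦ ?_
  rw [← norm_eq_iInf_iff_real_inner_le_zero hS hp]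
  have : Nonempty S := ⟨p, hp⟩
  have hbdd : BddBelow (Set.range fun w : S ↦ ‖y - w‖) :=
    ⟨0, Set.forall_mem_range.2 fun _ ↦ norm_nonneg _⟩
  constructor
  · intro hmin
    exact le_antisymm (le_ciInf fun w ↦ hmin w w.2) (ciInf_le hbdd ⟨p, hp⟩)
  · intro heq r hr
    exact heq.trans_le (ciInf_le hbdd ⟨r, hr⟩)

theorem IsProjOn.eq_of_convex (hS : Convex ℝ S) (hp : IsProjOn S y p) (hq : IsProjOn S y q) :
    p = q := by
  rw [isProjOn_iff_inner_sub_nonpos hS] at hp hq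
  have hpq := hp.2 q hq.1
  have hqp := hq.2 p hp.1
  have hsum : inner ℝ (q - p) (q - p) = inner ℝ (y - p) (q - p) + inner ℝ (y - q) (p - q) := by
    rw [← neg_sub q p, inner_neg_right, ← sub_eq_add_neg, ← inner_sub_left, sub_sub_sub_cancel_left]
  have hzero : q - p = 0 := real_inner_self_nonpos.1 (by linarith)
  exact (sub_eq_zero.1 hzero).symm

theorem isProjOn_iff_inner_nonpos_of_neg_mem (hS : Convex ℝ S)
    (hadd : ∀ v ∈ S, ∀ w ∈ S, v + w ∈ S) (hp : p ∈ S) (hneg : -p ∈ S) :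
    IsProjOn S y p ↔ ∀ w ∈ S, inner ℝ (y - p) w ≤ 0 := by
  rw [isProjOn_iff_inner_sub_nonpos hS, and_iff_right hp]
  constructor
  · intro h w hw
    simpa using h (w + p) (hadd w hw p hp)
  · intro h w hw
    simpa only [sub_eq_add_neg] using h (w + -p) (hadd w hw (-p) hneg)

end Projection

section IsoCone

variable {n : ℕ}

theorem mem_isoCone_iff_antitone {x : EuclideanSpace ℝ (Fin n)} : x ∈ isoCone n ↔ Antitone x :=
  Iff.rfl

theorem convex_isoCone : Convex ℝ (isoCone n) := by
  intro x hx y hy s t hs ht _ i j hij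
  exact add_le_add (mul_le_mul_of_nonneg_left (hx i j hij) hs)
    (mul_le_mul_of_nonneg_left (hy i j hij) ht)

theorem add_mem_isoCone {x y : EuclideanSpace ℝ (Fin n)} (hx : x ∈ isoCone n)
    (hy : y ∈ isoCone n) : x + y ∈ isoCone n :=
  fun i j hij ↦ add_le_add (hx i j hij) (hy i j hij)

theorem forall_mem_isoCone_inner_nonpos_iff {b : EuclideanSpace ℝ (Fin n)} :
    (∀ w ∈ isoCone n, inner ℝ b w ≤ 0) ↔ ∑ i, b i = 0 ∧ ∀ k, ∑ i ∈ Iic k, b i ≤ 0 := by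
  rw [← forall_antitone_sum_mul_nonpos_iff, (WithLp.equiv 2 (Fin n → ℝ)).symm.surjective.forall]
  simp [mem_isoCone_iff_antitone, PiLp.inner_apply]

theorem isProjOn_isoCone_const_iff {a : EuclideanSpace ℝ (Fin n)} {c : ℝ} :
    IsProjOn (isoCone n) a (WithLp.toLp 2 fun _ ↦ c) ↔
      ∑ i, a i = n * c ∧ ∀ k : Fin n, ∑ i ∈ Iic k, a i ≤ (k + 1) * c := by
  rw [isProjOn_iff_inner_nonpos_of_neg_mem convex_isoCone (fun _ hv _ hw ↦ add_mem_isoCone hv hw)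
    (fun _ _ _ ↦ le_rfl) (fun _ _ _ ↦ le_rfl), forall_mem_isoCone_inner_nonpos_iff]
  simp [sum_sub_distrib, sub_eq_zero]

end IsoCone

/-- Lemma 6.8 (`lm:single_val`): the isotonic projection `a⁺` is a constant vector
iff every initial average of `a` is at most the overall mean of `a`. -/
theorem isoProj_const_iff {n : ℕ} (a ap : EuclideanSpace ℝ (Fin n))
    (hap : IsProjOn (isoCone n) a ap) :
    (∀ i j : Fin n, ap i = ap j) ↔
      ∀ k : Fin n, (∑ i ∈ Finset.Iic k, a i) / (k.1 + 1 : ℝ) ≤ (∑ i, a i) / n := by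
  constructor
  · intro hconst k
    have hproj : IsProjOn (isoCone n) a (WithLp.toLp 2 fun _ ↦ ap k) := by
      convert hap using 1
      ext i
      exact hconst k i
    obtain ⟨htotal, hinit⟩ := isProjOn_isoCone_const_iff.1 hproj
    have hn : (n : ℝ) ≠ 0 := Nat.cast_ne_zero.2 k.pos.ne'
    rw [htotal, mul_div_cancel_left₀ _ hn, div_le_iff₀' (by positivity)]
    exact hinit k
  · intro havg i j
    have hn : (n : ℝ) ≠ 0 := Nat.cast_ne_zero.2 i.pos.ne'
    have hproj : IsProjOn (isoCone n) a (WithLp.toLp 2 fun _ ↦ (∑ i, a i) / n) :=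
      isProjOn_isoCone_const_iff.2 ⟨(mul_div_cancel₀ _ hn).symm,
        fun k ↦ (div_le_iff₀' (by positivity)).1 (havg k)⟩
    rw [hap.eq_of_convex convex_isoCone hproj]
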